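/- Virasoro cocycle classification with normalization: Let K : ℤ×ℤ → ℂ satisfy K(m,n) = −K(n,m) for all m, n ∈ ℤ and the cocycle identity (m−n)K(m+n,p) + (n−p)K(n+p,m) + (p−m)K(p+m,n) = 0 for all m, n, p ∈ ℤ. If moreover K(0,m) = 0 for all m ∈ ℤ and K(1,−1) = 0, then there exists c ∈ ℂ such that K(m,n) = (c/12)(m³ − m)·δ_{m+n,0} for all m, n ∈ ℤ. -/

import Mathlib

/-- Virasoro cocycle classification with normalization: an antisymmetric 2-cocycle
`K` on the Witt algebra with `K 0 m = 0` and `K 1 (-1) = 0` is the standard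
Virasoro cocycle `(c/12)(m³ - m) δ_{m+n,0}` for some `c ∈ ℂ`. -/
theorem stmt_3 (K : ℤ → ℤ → ℂ)
    (hanti : ∀ m n : ℤ, K m n = - K n m)
    (hcoc : ∀ m n p : ℤ,
      ((m : ℂ) - n) * K (m + n) p + ((n : ℂ) - p) * K (n + p) m
        + ((p : ℂ) - m) * K (p + m) n = 0)
    (h0 : ∀ m : ℤ, K 0 m = 0)
    (h1 : K 1 (-1) = 0) :
    ∃ c : ℂ, ∀ m n : ℤ,
      K m n = c / 12 * ((m : ℂ) ^ 3 - m) * (if m + n = 0 then 1 else 0) := by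
  have hrec : ∀ m : ℤ, ((m : ℂ) - 1) * K (m + 1) (-(m + 1)) = ((m : ℂ) + 2) * K m (-m) := by
    intro m
    have h := hcoc m 1 (-(m + 1))
    have e1 : (1 : ℤ) + -(m + 1) = -m := by ring
    have e2 : -(m + 1) + m = (-1 : ℤ) := by ring
    rw [e1, e2, hanti (-m) m, hanti (-1) 1, h1] at h
    push_cast at h
    linear_combination h
  have hnat : ∀ k : ℕ, K ((k : ℤ) + 2) (-((k : ℤ) + 2))
      = K 2 (-2) / 6 * (((k : ℂ) + 2) ^ 3 - ((k : ℂ) + 2)) := by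
    intro k
    induction k with
    | zero => norm_num
    | succ k ih =>
      have h := hrec ((k : ℤ) + 2)
      rw [ih] at h
      have e : ((k + 1 : ℕ) : ℤ) + 2 = (k : ℤ) + 2 + 1 := by push_cast; ring
      rw [e]
      have hk : (k : ℂ) + 1 ≠ 0 := by exact_mod_cast Nat.succ_ne_zero k
      apply mul_left_cancel₀ hk
      push_cast at h ⊢
      linear_combination h
  have hpos : ∀ m : ℤ, 0 ≤ m → K m (-m) = K 2 (-2) / 6 * ((m : ℂ) ^ 3 - m) := by
    intro m hm
    by_cases hm0 : m = 0
    · subst hm0; simp [h0]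
    by_cases hm1 : m = 1
    · subst hm1; simp [h1]
    obtain ⟨k, hk⟩ := Int.eq_ofNat_of_zero_le (show 0 ≤ m - 2 by omega)
    obtain rfl : m = (k : ℤ) + 2 := by omega
    rw [hnat k]
    push_cast
    ring
  refine ⟨2 * K 2 (-2), fun m n => ?_⟩
  by_cases hmn : m + n = 0
  · obtain rfl : n = -m := by omega
    rw [if_pos hmn]
    rcases le_total 0 m with hm | hm
    · rw [hpos m hm]; ring
    · have h := hpos (-m) (by omega)
      rw [neg_neg] at h
      rw [hanti, h]
      push_cast
      ring
  · rw [if_neg hmn]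
    have h := hcoc m n 0
    rw [add_zero, zero_add, hanti (m + n) 0, h0, hanti n m] at h
    have hc : (m : ℂ) + n ≠ 0 := by exact_mod_cast hmn
    apply mul_left_cancel₀ hc
    push_cast at h
    linear_combination -h
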